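/- A function u ∈ W^{1,∞}(Ω_T) is a solution of u_t = (σ(u_x))_x + b u_x + c u + f in the sense of distributions in Ω_T (i.e., ∫∫_{Ω_T} (u ζ_t − σ(u_x) ζ_x + (b u_x + c u + f) ζ) dx dt = 0 for every ζ ∈ C_c^∞(Ω_T)) if and only if there exists v ∈ W^{1,∞}(Ω_T) such that v_x = u and v_t = σ(u_x) + b u + P_u + F a.e. in Ω_T; moreover, such a function v is unique up to an additive constant. -/

import Mathlib

open MeasureTheory Set
open scoped NNReal

noncomputable section

/-- The open space-time domain `Ω_T = (0,1) × (0,T)`. -/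
def OmegaT (T : ℝ) : Set (ℝ × ℝ) := Ioo (0:ℝ) 1 ×ˢ Ioo (0:ℝ) T

/-- The closed space-time domain `cl Ω_T = [0,1] × [0,T]`. -/
def ClOmegaT (T : ℝ) : Set (ℝ × ℝ) := Icc (0:ℝ) 1 ×ˢ Icc (0:ℝ) T

/-- `F(x,t) = ∫_0^x f(y,t) dy`. -/
def Fint (f : ℝ → ℝ → ℝ) (x t : ℝ) : ℝ := ∫ y in (0:ℝ)..x, f y t

/-- The potential operator `P_u(x,t) = ∫_0^x (c(y,t) - b_y(y,t)) u(y,t) dy`. -/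
def Pot (c bx : ℝ → ℝ → ℝ) (u : ℝ → ℝ → ℝ) (x t : ℝ) : ℝ :=
  ∫ y in (0:ℝ)..x, (c y t - bx y t) * u y t

/-- A stream function `v` for `u`: `v_x = u` and `v_t = σ(u_x) + b u + P_u + F` a.e. in `Ω_T`. -/
def IsStreamFunction (T : ℝ) (sigma : ℝ → ℝ) (b bx c f : ℝ → ℝ → ℝ)
    (u ux : ℝ → ℝ → ℝ) (v : ℝ → ℝ → ℝ) : Prop :=
  (∃ K : ℝ≥0, LipschitzOnWith K (fun p : ℝ × ℝ => v p.1 p.2) (ClOmegaT T)) ∧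
  ∃ vx vt : ℝ → ℝ → ℝ,
    (∀ᵐ p ∂(volume.restrict (OmegaT T)), HasDerivAt (fun y => v y p.2) (vx p.1 p.2) p.1) ∧
    (∀ᵐ p ∂(volume.restrict (OmegaT T)), HasDerivAt (fun τ => v p.1 τ) (vt p.1 p.2) p.2) ∧
    (∀ᵐ p ∂(volume.restrict (OmegaT T)), vx p.1 p.2 = u p.1 p.2) ∧
    (∀ᵐ p ∂(volume.restrict (OmegaT T)),
      vt p.1 p.2 = sigma (ux p.1 p.2) + b p.1 p.2 * u p.1 p.2
        + Pot c bx u p.1 p.2 + Fint f p.1 p.2)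

/-!
Since `∂_x (b u + P_u + F) = b u_x + c u + f`, integrating by parts in `x` turns the distributional
equation into `∂_t u = ∂_x g` with `g = σ(u_x) + b u + P_u + F`, which says that the field `(u, g)`
is weakly curl-free. On a rectangle this is equivalent to the existence of a potential `v`, that is
`v_x = u` and `v_t = g`, and two potentials differ by a constant.
-/

section LineDeriv

variable {F G : Type*} [NormedAddCommGroup F] [NormedSpace ℝ F] [NormedAddCommGroup G]
  [NormedSpace ℝ G]

theorem hasDerivAt_comp_const_add_iff {f : ℝ → G} {f' : G} {x : ℝ} :
    HasDerivAt (fun t => f (x + t)) f' 0 ↔ HasDerivAt f f' x := by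
  refine ⟨fun h => ?_, fun h => HasDerivAt.comp_const_add x 0 (by rwa [add_zero])⟩
  have h' : HasDerivAt (fun t => f (x + (-x + t))) f' x :=
    HasDerivAt.comp_const_add (f := fun t => f (x + t)) (-x) x (by rwa [neg_add_cancel])
  simpa only [add_neg_cancel_left] using h'

theorem hasLineDerivAt_fst_iff {f : ℝ × F → G} {f' : G} {p : ℝ × F} :
    HasLineDerivAt ℝ f f' p (1, 0) ↔ HasDerivAt (fun x => f (x, p.2)) f' p.1 := by
  rw [← hasDerivAt_comp_const_add_iff]
  simp [HasLineDerivAt, Prod.add_def]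

theorem hasLineDerivAt_snd_iff {f : F × ℝ → G} {f' : G} {p : F × ℝ} :
    HasLineDerivAt ℝ f f' p (0, 1) ↔ HasDerivAt (fun t => f (p.1, t)) f' p.2 := by
  rw [← hasDerivAt_comp_const_add_iff]
  simp [HasLineDerivAt, Prod.add_def]

theorem lineDeriv_fst_eq_deriv {f : ℝ × F → G} {p : ℝ × F} :
    lineDeriv ℝ f p (1, 0) = deriv (fun x => f (x, p.2)) p.1 := by
  simpa [lineDeriv, Prod.add_def] using deriv_comp_const_add (fun x => f (x, p.2)) p.1 0

theorem lineDeriv_snd_eq_deriv {f : F × ℝ → G} {p : F × ℝ} :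
    lineDeriv ℝ f p (0, 1) = deriv (fun t => f (p.1, t)) p.2 := by
  simpa [lineDeriv, Prod.add_def] using deriv_comp_const_add (fun t => f (p.1, t)) p.2 0

theorem hasLineDerivAt_sub {f g : F → G} {f' g' : G} {p v : F} (hf : HasLineDerivAt ℝ f f' p v)
    (hg : HasLineDerivAt ℝ g g' p v) : HasLineDerivAt ℝ (fun q => f q - g q) (f' - g') p v :=
  HasDerivAt.sub hf hg

end LineDeriv

section TestFunction

variable {E : Type*} [NormedAddCommGroup E] [NormedSpace ℝ E] {U : Set E} {φ : E → ℝ}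

/-- `φ ∈ C_c^∞(U)`: the test functions of the theory of distributions on `U`. -/
structure IsTestFunction (U : Set E) (φ : E → ℝ) : Prop where
  contDiff : ContDiff ℝ (⊤ : ℕ∞) φ
  hasCompactSupport : HasCompactSupport φ
  tsupport_subset : tsupport φ ⊆ U

namespace IsTestFunction

theorem of_forall_notMem_eq_zero {K : Set E} (hφ : ContDiff ℝ (⊤ : ℕ∞) φ) (hK : IsCompact K)
    (hKU : K ⊆ U) (hφK : ∀ p ∉ K, φ p = 0) : IsTestFunction U φ :=
  ⟨hφ, .intro hK hφK, (closure_minimal (Function.support_subset_iff'.2 hφK) hK.isClosed).trans hKU⟩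

theorem eq_zero (hφ : IsTestFunction U φ) {p : E} (hp : p ∉ U) : φ p = 0 :=
  image_eq_zero_of_notMem_tsupport fun h => hp (hφ.tsupport_subset h)

theorem differentiable (hφ : IsTestFunction U φ) : Differentiable ℝ φ :=
  hφ.contDiff.differentiable (by simp)

protected theorem sub {ψ : E → ℝ} (hφ : IsTestFunction U φ) (hψ : IsTestFunction U ψ) :
    IsTestFunction U fun p => φ p - ψ p :=
  ⟨hφ.contDiff.sub hψ.contDiff, hφ.hasCompactSupport.sub hψ.hasCompactSupport,
    (tsupport_sub φ ψ).trans (union_subset hφ.tsupport_subset hψ.tsupport_subset)⟩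

theorem lineDeriv_eq_fderiv (hφ : IsTestFunction U φ) (v : E) :
    (fun p => lineDeriv ℝ φ p v) = fun p => fderiv ℝ φ p v :=
  funext fun p => (hφ.differentiable p).lineDeriv_eq_fderiv

protected theorem lineDeriv (hφ : IsTestFunction U φ) (v : E) :
    IsTestFunction U fun p => lineDeriv ℝ φ p v := by
  rw [hφ.lineDeriv_eq_fderiv]
  exact ⟨(hφ.contDiff.fderiv_right (by simp)).clm_apply contDiff_const,
    hφ.hasCompactSupport.fderiv_apply ℝ v,
    (tsupport_fderiv_apply_subset ℝ v).trans hφ.tsupport_subset⟩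

theorem lineDeriv_lineDeriv_comm (hφ : IsTestFunction U φ) (v w p : E) :
    lineDeriv ℝ (fun q => lineDeriv ℝ φ q v) p w =
      lineDeriv ℝ (fun q => lineDeriv ℝ φ q w) p v := by
  have hφ₂ : ContDiff ℝ 2 φ := contDiff_infty.mp hφ.contDiff 2
  have hφ' : DifferentiableAt ℝ (fderiv ℝ φ) p :=
    (hφ₂.fderiv_right (m := 1) le_rfl).differentiable one_ne_zero p
  have lineDeriv_lineDeriv (v w : E) :
      lineDeriv ℝ (fun q => lineDeriv ℝ φ q v) p w = fderiv ℝ (fderiv ℝ φ) p w v := by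
    rw [((hφ.lineDeriv v).differentiable p).lineDeriv_eq_fderiv, hφ.lineDeriv_eq_fderiv,
      fderiv_clm_apply hφ' (differentiableAt_const v)]
    simp
  have symm : IsSymmSndFDerivAt ℝ φ p := hφ₂.contDiffAt.isSymmSndFDerivAt (by simp)
  rw [lineDeriv_lineDeriv, lineDeriv_lineDeriv, symm.eq]

variable [MeasurableSpace E] {μ : Measure E} {f : E → ℝ}

protected theorem integrable [OpensMeasurableSpace E] [IsFiniteMeasureOnCompacts μ]
    (hφ : IsTestFunction U φ) : Integrable φ μ :=
  hφ.contDiff.continuous.integrable_of_hasCompactSupport hφ.hasCompactSupport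

theorem setIntegral_mul_eq_integral (hφ : IsTestFunction U φ) :
    ∫ p in U, f p * φ p ∂μ = ∫ p, f p * φ p ∂μ :=
  setIntegral_eq_integral_of_forall_compl_eq_zero fun p hp => by rw [hφ.eq_zero hp, mul_zero]

theorem integrableOn_mul [OpensMeasurableSpace E] (hφ : IsTestFunction U φ)
    (hf : IntegrableOn f U μ) : IntegrableOn (fun p => f p * φ p) U μ := by
  obtain ⟨C, hC⟩ := hφ.contDiff.continuous.bounded_above_of_compact_support hφ.hasCompactSupport
  exact hf.mul_bdd (hφ.contDiff.continuous.stronglyMeasurable_of_hasCompactSupport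
    hφ.hasCompactSupport).aestronglyMeasurable (ae_of_all _ hC)

theorem exists_integral_eq_one [BorelSpace E] [FiniteDimensional ℝ E] [IsLocallyFiniteMeasure μ]
    [μ.IsOpenPosMeasure] (hU : IsOpen U) (hU₀ : U.Nonempty) :
    ∃ ρ, IsTestFunction U ρ ∧ ∫ p, ρ p ∂μ = 1 := by
  obtain ⟨c, hc⟩ := hU₀
  obtain ⟨r, hr, hrU⟩ := Metric.nhds_basis_closedBall.mem_iff.1 (hU.mem_nhds hc)
  let bump : ContDiffBump c := ⟨r / 2, r, half_pos hr, half_lt_self hr⟩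
  exact ⟨bump.normed μ, ⟨bump.contDiff_normed, bump.hasCompactSupport_normed,
    bump.tsupport_normed_eq.trans_subset hrU⟩, bump.integral_normed⟩

end IsTestFunction

theorem ae_restrict_eq_of_setIntegral_mul_eq [FiniteDimensional ℝ E] [MeasurableSpace E]
    [BorelSpace E] {μ : Measure E} {f g : E → ℝ} (hU : IsOpen U) (hf : IntegrableOn f U μ)
    (hg : IntegrableOn g U μ)
    (hfg : ∀ φ, IsTestFunction U φ → ∫ p in U, f p * φ p ∂μ = ∫ p in U, g p * φ p ∂μ) :
    f =ᵐ[μ.restrict U] g := by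
  rw [Filter.EventuallyEq, ae_restrict_iff' hU.measurableSet]
  refine (hU.ae_eq_zero_of_integral_contDiff_smul_eq_zero (hf.sub hg).locallyIntegrableOn
    fun φ hφ hφc hφU => ?_).mono fun p hp hpU => sub_eq_zero.1 (hp hpU)
  have hφ' : IsTestFunction U φ := ⟨hφ, hφc, hφU⟩
  simp only [smul_eq_mul, mul_comm (φ _)]
  rw [← hφ'.setIntegral_mul_eq_integral]
  simp only [Pi.sub_apply, sub_mul]
  rw [integral_sub (hφ'.integrableOn_mul hf) (hφ'.integrableOn_mul hg), hfg φ hφ', sub_self]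

section LipschitzOnWith

variable [MeasurableSpace E] [BorelSpace E] {μ : Measure E} {f g f' f₁ f₂ : E → ℝ} {K : ℝ≥0}
  {v w : E}

theorem ae_restrict_hasLineDerivAt_congr (hU : IsOpen U) (hfg : EqOn f g U)
    (hf : ∀ᵐ p ∂μ.restrict U, HasLineDerivAt ℝ f (f' p) p v) :
    ∀ᵐ p ∂μ.restrict U, HasLineDerivAt ℝ g (f' p) p v := by
  filter_upwards [hf, ae_restrict_mem hU.measurableSet] with p hp hpU
  exact hp.congr_of_eventuallyEq (hfg.symm.eventuallyEq_of_mem (hU.mem_nhds hpU))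

theorem memLp_top_of_hasLineDerivAt (hU : IsOpen U) (hf : LipschitzOnWith K f U)
    (hf' : ∀ᵐ p ∂μ.restrict U, HasLineDerivAt ℝ f (f' p) p v) : MemLp f' ⊤ (μ.restrict U) := by
  obtain ⟨g, hg, hfg⟩ := hf.extend_real
  refine ((hg.memLp_lineDeriv v).restrict U).ae_eq ?_
  filter_upwards [ae_restrict_hasLineDerivAt_congr hU hfg hf'] with p hp
  exact hp.lineDeriv

variable [FiniteDimensional ℝ E] [μ.IsAddHaarMeasure]

theorem setIntegral_lineDeriv_mul (hU : IsOpen U) (hf : LipschitzOnWith K f U)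
    (hf' : ∀ᵐ p ∂μ.restrict U, HasLineDerivAt ℝ f (f' p) p v) (hφ : IsTestFunction U φ) :
    ∫ p in U, f' p * φ p ∂μ = -∫ p in U, f p * lineDeriv ℝ φ p v ∂μ := by
  obtain ⟨g, hg, hfg⟩ := hf.extend_real
  obtain ⟨L, hL⟩ := ContDiff.lipschitzWith_of_hasCompactSupport hφ.hasCompactSupport hφ.contDiff
    (by simp)
  calc ∫ p in U, f' p * φ p ∂μ = ∫ p in U, lineDeriv ℝ g p v * φ p ∂μ := by
        refine integral_congr_ae ?_
        filter_upwards [ae_restrict_hasLineDerivAt_congr hU hfg hf'] with p hp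
        rw [hp.lineDeriv]
    _ = -∫ p, g p * lineDeriv ℝ φ p v ∂μ := by
        rw [hφ.setIntegral_mul_eq_integral, hg.integral_lineDeriv_mul_eq hL hφ.hasCompactSupport]
        simp only [lineDeriv_neg, mul_comm _ (g _), mul_neg, integral_neg]
    _ = -∫ p in U, f p * lineDeriv ℝ φ p v ∂μ := by
        rw [← (hφ.lineDeriv v).setIntegral_mul_eq_integral]
        exact congrArg Neg.neg (setIntegral_congr_fun hU.measurableSet fun p hp => by rw [hfg hp])

theorem setIntegral_lineDeriv_mul_lineDeriv_comm (hU : IsOpen U) (hf : LipschitzOnWith K f U)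
    (hf₁ : ∀ᵐ p ∂μ.restrict U, HasLineDerivAt ℝ f (f₁ p) p v)
    (hf₂ : ∀ᵐ p ∂μ.restrict U, HasLineDerivAt ℝ f (f₂ p) p w) (hφ : IsTestFunction U φ) :
    ∫ p in U, f₁ p * lineDeriv ℝ φ p w ∂μ = ∫ p in U, f₂ p * lineDeriv ℝ φ p v ∂μ := by
  rw [setIntegral_lineDeriv_mul hU hf hf₁ (hφ.lineDeriv w),
    setIntegral_lineDeriv_mul hU hf hf₂ (hφ.lineDeriv v)]
  simp only [hφ.lineDeriv_lineDeriv_comm v w]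

end LipschitzOnWith

end TestFunction

section DuBoisReymond

variable {F : Type*} [NormedAddCommGroup F] [NormedSpace ℝ F]

theorem contDiff_integral_sub_mul {f : ℝ → ℝ} (hf : LocallyIntegrable f) {θ : ℝ × F → ℝ} {n : ℕ∞}
    (hθ : ContDiff ℝ n θ) (hθc : HasCompactSupport θ) :
    ContDiff ℝ n fun p : ℝ × F => ∫ y, f (p.1 - y) * θ (y, p.2) := by
  have h := contDiffOn_convolution_right_with_param_comp (𝕜 := ℝ) (μ := volume) (n := n)
    (.mul ℝ ℝ) (v := (Prod.fst : ℝ × F → ℝ)) contDiff_fst.contDiffOn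
    (g := fun p y => θ (y, p.2)) isOpen_univ (hθc.image continuous_fst)
    (fun p y _ hy => image_eq_zero_of_notMem_tsupport fun h => hy ⟨_, h, rfl⟩) hf
    (hθ.comp (by fun_prop : ContDiff ℝ n fun q : (ℝ × F) × ℝ => (q.2, q.1.2))).contDiffOn
  simpa only [convolution_eq_swap, ContinuousLinearMap.mul_apply', contDiffOn_univ] using h

theorem contDiff_integral_fst {θ : ℝ × F → ℝ} {n : ℕ∞} (hθ : ContDiff ℝ n θ)
    (hθc : HasCompactSupport θ) : ContDiff ℝ n fun t => ∫ y, θ (y, t) := by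
  have h := contDiff_integral_sub_mul (locallyIntegrable_const 1) hθ hθc
  simp only [one_mul] at h
  exact h.comp (contDiff_prodMk_right (0 : ℝ))

theorem contDiff_integral_Iic_fst {θ : ℝ × F → ℝ} {n : ℕ∞} (hθ : ContDiff ℝ n θ)
    (hθc : HasCompactSupport θ) : ContDiff ℝ n fun p : ℝ × F => ∫ y in Iic p.1, θ (y, p.2) := by
  have heaviside : LocallyIntegrable (indicator (Ici 0) 1 : ℝ → ℝ) :=
    (locallyIntegrable_const 1).indicator measurableSet_Ici
  convert contDiff_integral_sub_mul heaviside hθ hθc using 2 with p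
  rw [← integral_indicator measurableSet_Iic]
  congr with y
  simp [indicator_apply]

theorem hasDerivAt_integral_Iic {η : ℝ → ℝ} (hη : Continuous η) (hηi : Integrable η) (x : ℝ) :
    HasDerivAt (fun x => ∫ y in Iic x, η y) (η x) x := by
  have split (x : ℝ) : ∫ y in Iic x, η y = (∫ y in Iic 0, η y) + ∫ y in (0 : ℝ)..x, η y := by
    rw [← intervalIntegral.integral_Iic_sub_Iic hηi.integrableOn hηi.integrableOn]
    ring
  rw [funext split]
  exact (intervalIntegral.integral_hasDerivAt_right (hη.intervalIntegrable _ _)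
    (hη.stronglyMeasurableAtFilter _ _) hη.continuousAt).const_add _

theorem exists_Icc_between {I A : Set ℝ} (hI : I.OrdConnected) (hA : IsCompact A) (hAI : A ⊆ I) :
    ∃ a b, A ⊆ Icc a b ∧ Icc a b ⊆ I := by
  rcases A.eq_empty_or_nonempty with rfl | hne
  · exact ⟨1, 0, by simp, by simp⟩
  · exact ⟨sInf A, sSup A, hA.isBounded.subset_Icc_sInf_sSup,
      hI.out (hAI (hA.sInf_mem hne)) (hAI (hA.sSup_mem hne))⟩

namespace IsTestFunction

variable {I : Set ℝ} {U : Set F} {θ η : ℝ × F → ℝ} {ρ : ℝ → ℝ}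

theorem slice_fst (hθ : IsTestFunction (I ×ˢ U) θ) (t : F) :
    IsTestFunction I fun x => θ (x, t) := by
  refine .of_forall_notMem_eq_zero (hθ.contDiff.comp (contDiff_prodMk_left t))
    (hθ.hasCompactSupport.image continuous_fst) ?_ fun x hx =>
    image_eq_zero_of_notMem_tsupport fun h => hx ⟨_, h, rfl⟩
  exact (image_mono hθ.tsupport_subset).trans (fst_image_prod_subset I U)

theorem integral_Iic_fst (hI : I.OrdConnected) (hθ : IsTestFunction (I ×ˢ U) θ)
    (hθ₀ : ∀ t, ∫ x, θ (x, t) = 0) :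
    IsTestFunction (I ×ˢ U) fun p => ∫ y in Iic p.1, θ (y, p.2) := by
  have hfst : Prod.fst '' tsupport θ ⊆ I :=
    (image_mono hθ.tsupport_subset).trans (fst_image_prod_subset I U)
  have hsnd : Prod.snd '' tsupport θ ⊆ U :=
    (image_mono hθ.tsupport_subset).trans (snd_image_prod_subset I U)
  obtain ⟨a, b, hab, habI⟩ :=
    exists_Icc_between hI (hθ.hasCompactSupport.image continuous_fst) hfst
  refine .of_forall_notMem_eq_zero (contDiff_integral_Iic_fst hθ.contDiff hθ.hasCompactSupport)
    (isCompact_Icc.prod (hθ.hasCompactSupport.image continuous_snd)) (prod_mono habI hsnd) ?_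
  rintro ⟨x, t⟩ hxt
  contrapose! hxt
  have mem_of_ne_zero {y : ℝ} (hy : θ (y, t) ≠ 0) :
      y ∈ Icc a b ∧ t ∈ Prod.snd '' tsupport θ :=
    ⟨hab ⟨_, subset_tsupport _ hy, rfl⟩, ⟨_, subset_tsupport _ hy, rfl⟩⟩
  obtain ⟨y, hyx, hy⟩ : ∃ y ∈ Iic x, θ (y, t) ≠ 0 := by
    contrapose! hxt
    exact setIntegral_eq_zero_of_forall_eq_zero hxt
  obtain ⟨z, hxz, hz⟩ : ∃ z ∈ Ioi x, θ (z, t) ≠ 0 := by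
    contrapose! hxt
    have hi : Integrable fun y => θ (y, t) := (hθ.slice_fst t).integrable
    have h := intervalIntegral.integral_Iic_add_Ioi (b := x) hi.integrableOn hi.integrableOn
    rwa [setIntegral_eq_zero_of_forall_eq_zero hxt, add_zero, hθ₀] at h
  exact ⟨⟨(mem_of_ne_zero hy).1.1.trans hyx, hxz.le.trans (mem_of_ne_zero hz).1.2⟩,
    (mem_of_ne_zero hy).2⟩

theorem lineDeriv_integral_Iic_fst (hθ : IsTestFunction (I ×ˢ U) θ) (p : ℝ × F) :
    lineDeriv ℝ (fun p => ∫ y in Iic p.1, θ (y, p.2)) p (1, 0) = θ p :=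
  (hasLineDerivAt_fst_iff.2 (hasDerivAt_integral_Iic
    (hθ.slice_fst p.2).contDiff.continuous (hθ.slice_fst p.2).integrable p.1)).lineDeriv

theorem mul_integral_fst (hρ : IsTestFunction I ρ) (hη : IsTestFunction (I ×ˢ U) η) :
    IsTestFunction (I ×ˢ U) fun p => ρ p.1 * ∫ y, η (y, p.2) := by
  have hsnd : Prod.snd '' tsupport η ⊆ U :=
    (image_mono hη.tsupport_subset).trans (snd_image_prod_subset I U)
  refine .of_forall_notMem_eq_zero ((hρ.contDiff.comp contDiff_fst).mul
    ((contDiff_integral_fst hη.contDiff hη.hasCompactSupport).comp contDiff_snd))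
    (hρ.hasCompactSupport.prod (hη.hasCompactSupport.image continuous_snd))
    (prod_mono hρ.tsupport_subset hsnd) fun p hp => ?_
  contrapose! hp
  obtain ⟨hp₁, hp₂⟩ := mul_ne_zero_iff.1 hp
  obtain ⟨y, hy⟩ : ∃ y, η (y, p.2) ≠ 0 := by
    contrapose! hp₂
    simp [hp₂]
  exact ⟨subset_tsupport _ hp₁, _, subset_tsupport _ hy, rfl⟩

-- Subtracting `ρ ⊗ ∫ η` makes all the section integrals vanish, so that the primitive
-- `∫_{-∞}^x` keeps compact support.
theorem exists_lineDeriv_eq_sub_mul_integral_fst (hρ : IsTestFunction I ρ) (hI : I.OrdConnected)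
    (hρ₁ : ∫ x, ρ x = 1) (hη : IsTestFunction (I ×ˢ U) η) :
    ∃ φ, IsTestFunction (I ×ˢ U) φ ∧
      ∀ p, lineDeriv ℝ φ p (1, 0) = η p - ρ p.1 * ∫ y, η (y, p.2) := by
  have hθ := hη.sub (hρ.mul_integral_fst hη)
  refine ⟨_, hθ.integral_Iic_fst hI fun t => ?_, hθ.lineDeriv_integral_Iic_fst⟩
  change ∫ x, (η (x, t) - ρ x * ∫ y, η (y, t)) = 0
  rw [integral_sub (hη.slice_fst t).integrable (hρ.integrable.mul_const _), integral_mul_const, hρ₁,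
    one_mul, sub_self]

end IsTestFunction

theorem setIntegral_prod_mul_fst_mul_snd {X Y : Type*} [MeasurableSpace X] [MeasurableSpace Y]
    {μ : Measure X} {ν : Measure Y} [SFinite μ] [SFinite ν] {s : Set X} {t : Set Y}
    {D : X × Y → ℝ} {ρ : X → ℝ} {m : Y → ℝ}
    (hi : IntegrableOn (fun p => D p * (ρ p.1 * m p.2)) (s ×ˢ t) (μ.prod ν)) :
    ∫ p in s ×ˢ t, D p * (ρ p.1 * m p.2) ∂μ.prod ν =
      ∫ y in t, (∫ x in s, D (x, y) * ρ x ∂μ) * m y ∂ν := by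
  rw [IntegrableOn, ← Measure.prod_restrict] at hi
  rw [← Measure.prod_restrict, integral_prod_symm _ hi]
  simp only [← mul_assoc, integral_mul_const]

variable [MeasurableSpace F] {ν : Measure F} [SFinite ν]

theorem setIntegral_prod_snd_mul {I : Set ℝ} {U : Set F} {q : F → ℝ} {η : ℝ × F → ℝ}
    (hη : IsTestFunction (I ×ˢ U) η)
    (hi : IntegrableOn (fun p => q p.2 * η p) (I ×ˢ U) (volume.prod ν)) :
    ∫ p in I ×ˢ U, q p.2 * η p ∂volume.prod ν = ∫ t in U, q t * (∫ x, η (x, t)) ∂ν := by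
  rw [IntegrableOn, ← Measure.prod_restrict] at hi
  rw [← Measure.prod_restrict, integral_prod_symm _ hi]
  simp only [integral_const_mul, setIntegral_eq_integral_of_forall_compl_eq_zero fun _ hx =>
    (hη.slice_fst _).eq_zero hx]

theorem setIntegral_prod_integral_mul [OpensMeasurableSpace (ℝ × F)] {I : Set ℝ} {U : Set F}
    {D η : ℝ × F → ℝ} {ρ : ℝ → ℝ} (hρ : IsTestFunction I ρ) (hη : IsTestFunction (I ×ˢ U) η)
    (hD : IntegrableOn D (I ×ˢ U) (volume.prod ν))
    (hDρ : IntegrableOn (fun p => ∫ x in I, D (x, p.2) * ρ x) (I ×ˢ U) (volume.prod ν)) :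
    ∫ p in I ×ˢ U, (∫ x in I, D (x, p.2) * ρ x) * η p ∂volume.prod ν =
      ∫ p in I ×ˢ U, D p * (ρ p.1 * ∫ y, η (y, p.2)) ∂volume.prod ν := by
  rw [setIntegral_prod_snd_mul (q := fun t => ∫ x in I, D (x, t) * ρ x) hη
      (hη.integrableOn_mul hDρ),
    setIntegral_prod_mul_fst_mul_snd (m := fun t => ∫ y, η (y, t))
      ((hρ.mul_integral_fst hη).integrableOn_mul hD)]

theorem exists_ae_eq_comp_snd_of_integral_lineDeriv_eq_zero [FiniteDimensional ℝ F]
    [BorelSpace F] {a b : ℝ} {U : Set F} {D : ℝ × F → ℝ} (hab : a < b) (hU : IsOpen U)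
    (hD : IntegrableOn D (Ioo a b ×ˢ U) (volume.prod ν))
    (hD₀ : ∀ φ, IsTestFunction (Ioo a b ×ˢ U) φ →
      ∫ p in Ioo a b ×ˢ U, D p * lineDeriv ℝ φ p (1, 0) ∂volume.prod ν = 0) :
    ∃ q, IntegrableOn q U ν ∧
      D =ᵐ[(volume.prod ν).restrict (Ioo a b ×ˢ U)] fun p => q p.2 := by
  obtain ⟨ρ, hρ, hρ₁⟩ := IsTestFunction.exists_integral_eq_one (μ := volume) isOpen_Ioo
    (nonempty_Ioo.2 hab)
  have hDρ : IntegrableOn (fun p => D p * ρ p.1) (Ioo a b ×ˢ U) (volume.prod ν) := by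
    obtain ⟨C, hC⟩ := hρ.contDiff.continuous.bounded_above_of_compact_support hρ.hasCompactSupport
    exact hD.mul_bdd (hρ.contDiff.continuous.comp continuous_fst).aestronglyMeasurable
      (ae_of_all _ fun p => hC p.1)
  let q t := ∫ x in Ioo a b, D (x, t) * ρ x
  have hq : IntegrableOn q U ν := by
    rw [IntegrableOn, ← Measure.prod_restrict] at hDρ
    exact hDρ.integral_prod_right
  have hq' : IntegrableOn (fun p => q p.2) (Ioo a b ×ˢ U) (volume.prod ν) := by
    rw [IntegrableOn, ← Measure.prod_restrict]
    exact hq.comp_snd _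
  refine ⟨q, hq, ae_restrict_eq_of_setIntegral_mul_eq (isOpen_Ioo.prod hU) hD hq' fun η hη => ?_⟩
  obtain ⟨φ, hφ, hφη⟩ := hρ.exists_lineDeriv_eq_sub_mul_integral_fst ordConnected_Ioo hρ₁ hη
  have h₀ := hD₀ φ hφ
  simp only [hφη, mul_sub] at h₀
  rwa [integral_sub (hη.integrableOn_mul hD) ((hρ.mul_integral_fst hη).integrableOn_mul hD),
    ← setIntegral_prod_integral_mul hρ hη hD hq', sub_eq_zero] at h₀

end DuBoisReymond

section IntegrationByParts

theorem ae_ae_restrict_of_ae_restrict_prod {X Y : Type*} [MeasurableSpace X] [MeasurableSpace Y]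
    {μ : Measure X} {ν : Measure Y} [SFinite μ] [SFinite ν] {s : Set X} {t : Set Y}
    {P : X × Y → Prop} (h : ∀ᵐ p ∂(μ.prod ν).restrict (s ×ˢ t), P p) :
    ∀ᵐ x ∂μ.restrict s, ∀ᵐ y ∂ν.restrict t, P (x, y) := by
  rw [← Measure.prod_restrict] at h
  exact Measure.ae_ae_of_ae_prod h

theorem ae_ae_restrict_of_ae_restrict_prod' {X Y : Type*} [MeasurableSpace X] [MeasurableSpace Y]
    {μ : Measure X} {ν : Measure Y} [SFinite μ] [SFinite ν] {s : Set X} {t : Set Y}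
    {P : X × Y → Prop} (h : ∀ᵐ p ∂(μ.prod ν).restrict (s ×ˢ t), P p) :
    ∀ᵐ y ∂ν.restrict t, ∀ᵐ x ∂μ.restrict s, P (x, y) := by
  rw [← Measure.prod_restrict] at h
  exact Measure.ae_ae_of_ae_prod (Measure.measurePreserving_swap.quasiMeasurePreserving.ae h)

theorem setIntegral_Ioo_mul_deriv {a b : ℝ} (hab : a < b) {f f' φ : ℝ → ℝ}
    (hf : AbsolutelyContinuousOnInterval f a b)
    (hf' : ∀ᵐ x ∂volume.restrict (Ioo a b), HasDerivAt f (f' x) x)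
    (hφ : IsTestFunction (Ioo a b) φ) :
    ∫ x in Ioo a b, f x * deriv φ x = -∫ x in Ioo a b, f' x * φ x := by
  have hφac : AbsolutelyContinuousOnInterval φ a b :=
    (hφ.contDiff.of_le (by simp)).contDiffOn.absolutelyContinuousOnInterval
  have h := hf.integral_mul_deriv_eq_deriv_mul hφac
  rw [hφ.eq_zero (by simp : a ∉ Ioo a b), hφ.eq_zero (by simp : b ∉ Ioo a b),
    mul_zero, mul_zero, sub_self, zero_sub, intervalIntegral.integral_of_le hab.le,
    intervalIntegral.integral_of_le hab.le, integral_Ioc_eq_integral_Ioo,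
    integral_Ioc_eq_integral_Ioo] at h
  rw [h, neg_inj]
  refine integral_congr_ae ?_
  filter_upwards [hf'] with x hx
  rw [hx.deriv]

theorem setIntegral_prod_mul_lineDeriv_fst {F : Type*} [NormedAddCommGroup F] [NormedSpace ℝ F]
    [MeasurableSpace F] [OpensMeasurableSpace (ℝ × F)] {ν : Measure F} [SFinite ν] {a b : ℝ}
    (hab : a < b) {U : Set F} (hU : MeasurableSet U) {f f' φ : ℝ × F → ℝ}
    (hf : IntegrableOn f (Ioo a b ×ˢ U) (volume.prod ν))
    (hfac : ∀ t ∈ U, AbsolutelyContinuousOnInterval (fun x => f (x, t)) a b)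
    (hf' : ∀ᵐ p ∂(volume.prod ν).restrict (Ioo a b ×ˢ U), HasLineDerivAt ℝ f (f' p) p (1, 0))
    (hf'i : IntegrableOn f' (Ioo a b ×ˢ U) (volume.prod ν))
    (hφ : IsTestFunction (Ioo a b ×ˢ U) φ) :
    ∫ p in Ioo a b ×ˢ U, f p * lineDeriv ℝ φ p (1, 0) ∂volume.prod ν =
      -∫ p in Ioo a b ×ˢ U, f' p * φ p ∂volume.prod ν := by
  have i₁ := (hφ.lineDeriv (1, 0)).integrableOn_mul hf
  have i₂ := hφ.integrableOn_mul hf'i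
  rw [IntegrableOn, ← Measure.prod_restrict] at i₁ i₂
  rw [← Measure.prod_restrict, integral_prod_symm _ i₁, integral_prod_symm _ i₂, ← integral_neg]
  refine integral_congr_ae ?_
  filter_upwards [ae_ae_restrict_of_ae_restrict_prod' hf', ae_restrict_mem hU] with t ht htU
  simp only [lineDeriv_fst_eq_deriv]
  exact setIntegral_Ioo_mul_deriv hab (hfac t htU) (ht.mono fun _ => hasLineDerivAt_fst_iff.1)
    (hφ.slice_fst t)

end IntegrationByParts

section Primitive

theorem ae_restrict_hasLineDerivAt_lineDeriv {E : Type*} [NormedAddCommGroup E] [NormedSpace ℝ E]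
    [FiniteDimensional ℝ E] [MeasurableSpace E] [BorelSpace E] {μ : Measure E}
    [μ.IsAddHaarMeasure] {U : Set E} {f : E → ℝ} {K : ℝ≥0} {v : E} (hU : IsOpen U)
    (hf : LipschitzOnWith K f U) :
    ∀ᵐ p ∂μ.restrict U, HasLineDerivAt ℝ f (lineDeriv ℝ f p v) p v := by
  obtain ⟨g, hg, hfg⟩ := hf.extend_real
  have h := ae_restrict_of_ae (s := U) (hg.ae_lineDifferentiableAt (μ := μ) v)
  exact (ae_restrict_hasLineDerivAt_congr hU hfg.symm
    (h.mono fun p hp => hp.hasLineDerivAt)).mono fun p hp => by rwa [hp.lineDeriv]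

theorem lipschitzOnWith_section_fst {X Y Z : Type*} [PseudoEMetricSpace X] [PseudoEMetricSpace Y]
    [PseudoEMetricSpace Z] {f : X × Y → Z} {s : Set X} {t : Set Y} {K : ℝ≥0}
    (hf : LipschitzOnWith K f (s ×ˢ t)) {y : Y} (hy : y ∈ t) :
    LipschitzOnWith K (fun x => f (x, y)) s := fun x hx x' hx' => by
  simpa [Prod.edist_eq] using hf (mk_mem_prod hx hy) (mk_mem_prod hx' hy)

theorem lipschitzOnWith_section_snd {X Y Z : Type*} [PseudoEMetricSpace X] [PseudoEMetricSpace Y]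
    [PseudoEMetricSpace Z] {f : X × Y → Z} {s : Set X} {t : Set Y} {K : ℝ≥0}
    (hf : LipschitzOnWith K f (s ×ˢ t)) {x : X} (hx : x ∈ s) :
    LipschitzOnWith K (fun y => f (x, y)) t := fun y hy y' hy' => by
  simpa [Prod.edist_eq] using hf (mk_mem_prod hx hy) (mk_mem_prod hx hy')

theorem lipschitzOnWith_prod_of_sections {X Y Z : Type*} [PseudoMetricSpace X]
    [PseudoMetricSpace Y] [PseudoMetricSpace Z] {f : X × Y → Z} {s : Set X} {t : Set Y}
    {K L : ℝ≥0} (hK : ∀ y ∈ t, LipschitzOnWith K (fun x => f (x, y)) s)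
    (hL : ∀ x ∈ s, LipschitzOnWith L (fun y => f (x, y)) t) :
    LipschitzOnWith (K + L) f (s ×ˢ t) := by
  refine .of_dist_le_mul fun p hp q hq => ?_
  calc dist (f p) (f q) ≤ dist (f p) (f (q.1, p.2)) + dist (f (q.1, p.2)) (f q) :=
        dist_triangle _ _ _
    _ ≤ K * dist p.1 q.1 + L * dist p.2 q.2 := by
        gcongr
        · exact (hK p.2 hp.2).dist_le_mul p.1 hp.1 q.1 hq.1
        · exact (hL q.1 hq.1).dist_le_mul p.2 hp.2 q.2 hq.2
    _ ≤ K * dist p q + L * dist p q := by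
        gcongr
        · exact le_max_left _ _
        · exact le_max_right _ _
    _ = ↑(K + L) * dist p q := by rw [NNReal.coe_add, add_mul]

variable {a b : ℝ}

theorem lipschitzOnWith_intervalIntegral {G : Type*} [NormedAddCommGroup G] [NormedSpace ℝ G]
    {q : ℝ → G} {N : ℝ≥0} (hq : IntegrableOn q (Icc a b))
    (hN : ∀ᵐ t ∂volume.restrict (Icc a b), ‖q t‖ ≤ N) :
    LipschitzOnWith N (fun t => ∫ s in a..t, q s) (Icc a b) := by
  refine .of_dist_le_mul fun t ht t' ht' => ?_
  have intervalIntegrable {s : ℝ} (hs : s ∈ Icc a b) : IntervalIntegrable q volume a s :=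
    (intervalIntegrable_iff_integrableOn_Icc_of_le hs.1).2
      (hq.mono_set (Icc_subset_Icc_right hs.2))
  rw [dist_eq_norm, intervalIntegral.integral_interval_sub_left (intervalIntegrable ht)
    (intervalIntegrable ht'), Real.dist_eq]
  refine intervalIntegral.norm_integral_le_of_norm_le_const_ae ?_
  filter_upwards [(ae_restrict_iff' measurableSet_Icc).1 hN] with s hs hst
  exact hs (uIcc_subset_Icc ht' ht (uIoc_subset_uIcc hst))

theorem exists_lipschitzOnWith_ae_hasDerivAt (hab : a ≤ b) {q : ℝ → ℝ}
    (hq : MemLp q ⊤ (volume.restrict (Ioo a b))) :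
    ∃ (h : ℝ → ℝ) (N : ℝ≥0), LipschitzOnWith N h (Icc a b) ∧
      ∀ᵐ t ∂volume.restrict (Ioo a b), HasDerivAt h (q t) t := by
  have hqi : IntegrableOn q (Icc a b) := by
    rw [integrableOn_Icc_iff_integrableOn_Ioo]
    exact hq.integrable le_top
  have hqN := ae_le_lpNorm_exponent_top hq
  refine ⟨fun t => ∫ s in a..t, q s, ⟨lpNorm q ⊤ _, lpNorm_nonneg⟩,
    lipschitzOnWith_intervalIntegral hqi (by rwa [← restrict_Ioo_eq_restrict_Icc]), ?_⟩
  have hqi' : IntervalIntegrable q volume a b :=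
    (intervalIntegrable_iff_integrableOn_Icc_of_le hab).2 hqi
  filter_upwards [ae_restrict_of_ae hqi'.ae_hasDerivAt_integral,
    ae_restrict_mem measurableSet_Ioo] with t ht htab
  exact ht (Icc_subset_uIcc (Ioo_subset_Icc_self htab)) a left_mem_uIcc

theorem exists_lipschitzOnWith_hasLineDerivAt_fst {F : Type*} [NormedAddCommGroup F]
    [NormedSpace ℝ F] (hab : a ≤ b) {B : Set F} (hB : Bornology.IsBounded B) {u : ℝ × F → ℝ}
    {K : ℝ≥0} (hu : LipschitzOnWith K u (Icc a b ×ˢ B)) :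
    ∃ (V : ℝ × F → ℝ) (L : ℝ≥0), LipschitzOnWith L V (Icc a b ×ˢ B) ∧
      ∀ p ∈ Ioo a b ×ˢ B, HasLineDerivAt ℝ V (u p) p (1, 0) := by
  obtain ⟨g, hg, hug⟩ := hu.extend_real
  obtain ⟨M, hM⟩ := (hg.isBounded_image ((Metric.isBounded_Icc a b).prod hB)).exists_norm_le
  have hgc (t : F) : Continuous fun x => g (x, t) := hg.continuous.comp (by fun_prop)
  refine ⟨fun p => ∫ y in a..p.1, g (y, p.2), _, lipschitzOnWith_prod_of_sections
    (K := M.toNNReal) (L := K * (b - a).toNNReal) (fun t ht => ?_) fun x hx => ?_, fun p hp => ?_⟩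
  · refine lipschitzOnWith_intervalIntegral (hgc t).integrableOn_Icc ?_
    filter_upwards [ae_restrict_mem measurableSet_Icc] with y hy
    exact (hM _ ⟨(y, t), ⟨hy, ht⟩, rfl⟩).trans (Real.le_coe_toNNReal M)
  · refine .of_dist_le_mul fun t _ t' _ => ?_
    have hgtt' (y : ℝ) : ‖g (y, t) - g (y, t')‖ ≤ K * dist t t' := by
      simpa [dist_eq_norm] using hg.dist_le_mul (y, t) (y, t')
    have hxa : |x - a| ≤ b - a := by
      rw [abs_of_nonneg (sub_nonneg.2 hx.1)]
      exact sub_le_sub_right hx.2 a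
    calc dist (∫ y in a..x, g (y, t)) (∫ y in a..x, g (y, t'))
        = ‖∫ y in a..x, (g (y, t) - g (y, t'))‖ := by
          rw [dist_eq_norm, intervalIntegral.integral_sub ((hgc t).intervalIntegrable _ _)
            ((hgc t').intervalIntegrable _ _)]
      _ ≤ K * dist t t' * |x - a| :=
          intervalIntegral.norm_integral_le_of_norm_le_const fun y _ => hgtt' y
      _ ≤ K * dist t t' * (b - a) := by gcongr
      _ = ↑(K * (b - a).toNNReal) * dist t t' := by
          rw [NNReal.coe_mul, Real.coe_toNNReal _ (sub_nonneg.2 hab), mul_right_comm]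
  · rw [hasLineDerivAt_fst_iff, hug ⟨Ioo_subset_Icc_self hp.1, hp.2⟩]
    exact (hgc p.2).integral_hasStrictDerivAt a p.1 |>.hasDerivAt

theorem memLp_top_of_comp_snd {X Y : Type*} [MeasurableSpace X] [MeasurableSpace Y]
    {μ : Measure X} {ν : Measure Y} [SFinite μ] [SFinite ν] (hμ : μ ≠ 0) {q : Y → ℝ}
    (hq : MemLp (fun p : X × Y => q p.2) ⊤ (μ.prod ν)) : MemLp q ⊤ ν := by
  have := ae_neBot.2 hμ
  refine memLp_top_of_bound (hq.aestronglyMeasurable.of_comp_snd hμ)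
    (lpNorm (fun p : X × Y => q p.2) ⊤ (μ.prod ν)) ?_
  have h := Measure.ae_ae_of_ae_prod (Measure.measurePreserving_swap.quasiMeasurePreserving.ae
    (ae_le_lpNorm_exponent_top hq))
  exact h.mono fun t ht => ht.exists.elim fun _ => id

end Primitive

section Potential

/-- The equation `∂_t u = ∂_x g` in the sense of distributions in `Ω`: the field `(u, g)` is
curl-free. -/
def IsWeaklyCurlFree (Ω : Set (ℝ × ℝ)) (u g : ℝ × ℝ → ℝ) : Prop :=
  ∀ φ, IsTestFunction Ω φ →
    ∫ p in Ω, u p * lineDeriv ℝ φ p (0, 1) = ∫ p in Ω, g p * lineDeriv ℝ φ p (1, 0)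

/-- A potential of the field `(u, g)`: a function `v ∈ W^{1,∞}(Ω)`, taken to be Lipschitz on the
closure of `Ω`, with `v_x = u` and `v_t = g` a.e. in `Ω`. -/
structure IsLipschitzPotential (Ω : Set (ℝ × ℝ)) (u g v : ℝ × ℝ → ℝ) : Prop where
  exists_lipschitzOnWith : ∃ K : ℝ≥0, LipschitzOnWith K v (closure Ω)
  hasLineDerivAt_fst : ∀ᵐ p ∂volume.restrict Ω, HasLineDerivAt ℝ v (u p) p (1, 0)
  hasLineDerivAt_snd : ∀ᵐ p ∂volume.restrict Ω, HasLineDerivAt ℝ v (g p) p (0, 1)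

theorem IsWeaklyCurlFree.setIntegral_sub_mul_lineDeriv_eq_zero {Ω : Set (ℝ × ℝ)}
    {u g g' φ : ℝ × ℝ → ℝ} (h : IsWeaklyCurlFree Ω u g) (h' : IsWeaklyCurlFree Ω u g')
    (hg : IntegrableOn g Ω) (hg' : IntegrableOn g' Ω) (hφ : IsTestFunction Ω φ) :
    ∫ p in Ω, (g p - g' p) * lineDeriv ℝ φ p (1, 0) = 0 := by
  have hφx := hφ.lineDeriv (1, 0)
  simp only [sub_mul]
  rw [integral_sub (hφx.integrableOn_mul hg) (hφx.integrableOn_mul hg'), ← h φ hφ, ← h' φ hφ,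
    sub_self]

namespace IsLipschitzPotential

theorem isWeaklyCurlFree {Ω : Set (ℝ × ℝ)} {u g v : ℝ × ℝ → ℝ} (hΩ : IsOpen Ω)
    (hv : IsLipschitzPotential Ω u g v) : IsWeaklyCurlFree Ω u g := by
  obtain ⟨K, hK⟩ := hv.exists_lipschitzOnWith
  exact fun φ hφ => setIntegral_lineDeriv_mul_lineDeriv_comm hΩ (hK.mono subset_closure)
    hv.hasLineDerivAt_fst hv.hasLineDerivAt_snd hφ

theorem memLp_top_snd {Ω : Set (ℝ × ℝ)} {u g v : ℝ × ℝ → ℝ} (hΩ : IsOpen Ω)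
    (hv : IsLipschitzPotential Ω u g v) : MemLp g ⊤ (volume.restrict Ω) := by
  obtain ⟨K, hK⟩ := hv.exists_lipschitzOnWith
  exact memLp_top_of_hasLineDerivAt hΩ (hK.mono subset_closure) hv.hasLineDerivAt_snd

end IsLipschitzPotential

theorem integrableOn_of_memLp_top {X : Type*} [PseudoMetricSpace X] [ProperSpace X]
    [MeasurableSpace X] {μ : Measure X} [IsFiniteMeasureOnCompacts μ] {s : Set X}
    (hs : Bornology.IsBounded s) {f : X → ℝ} (hf : MemLp f ⊤ (μ.restrict s)) :
    IntegrableOn f s μ := by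
  have : IsFiniteMeasure (μ.restrict s) := isFiniteMeasure_restrict.2 hs.measure_lt_top.ne
  exact hf.integrable le_top

theorem closure_Ioo_prod_Ioo {a b c d : ℝ} (hab : a < b) (hcd : c < d) :
    closure (Ioo a b ×ˢ Ioo c d) = Icc a b ×ˢ Icc c d := by
  rw [closure_prod_eq, closure_Ioo hab.ne, closure_Ioo hcd.ne]

variable {a b c d : ℝ} {u g g' v w : ℝ × ℝ → ℝ} {K : ℝ≥0}

theorem exists_isLipschitzPotential_of_lipschitzOnWith (hab : a < b) (hcd : c < d)
    (hu : LipschitzOnWith K u (Icc a b ×ˢ Icc c d)) :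
    ∃ g v, IsLipschitzPotential (Ioo a b ×ˢ Ioo c d) u g v := by
  have hΩ : IsOpen (Ioo a b ×ˢ Ioo c d) := isOpen_Ioo.prod isOpen_Ioo
  obtain ⟨V, L, hV, hVu⟩ :=
    exists_lipschitzOnWith_hasLineDerivAt_fst hab.le (Metric.isBounded_Icc c d) hu
  rw [← closure_Ioo_prod_Ioo hab hcd] at hV
  refine ⟨fun p => lineDeriv ℝ V p (0, 1), V, ⟨L, hV⟩, ?_,
    ae_restrict_hasLineDerivAt_lineDeriv hΩ (hV.mono subset_closure)⟩
  filter_upwards [ae_restrict_mem hΩ.measurableSet] with p hp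
  exact hVu p ⟨hp.1, Ioo_subset_Icc_self hp.2⟩

theorem IsLipschitzPotential.add_comp_snd (hab : a < b) (hcd : c < d)
    (hv : IsLipschitzPotential (Ioo a b ×ˢ Ioo c d) u g v) {h q : ℝ → ℝ}
    (hh : LipschitzOnWith K h (Icc c d))
    (hq : ∀ᵐ t ∂volume.restrict (Ioo c d), HasDerivAt h (q t) t)
    (hg' : (fun p => g' p - g p) =ᵐ[volume.restrict (Ioo a b ×ˢ Ioo c d)] fun p => q p.2) :
    IsLipschitzPotential (Ioo a b ×ˢ Ioo c d) u g' fun p => v p + h p.2 := by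
  obtain ⟨L, hL⟩ := hv.exists_lipschitzOnWith
  have hq' : ∀ᵐ p ∂volume.restrict (Ioo a b ×ˢ Ioo c d), HasDerivAt h (q p.2) p.2 := by
    rw [Measure.volume_eq_prod, ← Measure.prod_restrict]
    exact Measure.quasiMeasurePreserving_snd.ae hq
  refine ⟨⟨_, hL.add (hh.comp (LipschitzWith.prod_snd.lipschitzOnWith) ?_)⟩, ?_, ?_⟩
  · rw [closure_Ioo_prod_Ioo hab hcd]
    exact fun p hp => hp.2
  · filter_upwards [hv.hasLineDerivAt_fst] with p hp
    rw [hasLineDerivAt_fst_iff] at hp ⊢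
    exact hp.add_const (h p.2)
  · filter_upwards [hv.hasLineDerivAt_snd, hq', hg'] with p hp hqp hgp
    rw [hasLineDerivAt_snd_iff] at hp ⊢
    rw [← add_sub_cancel (g p) (g' p), hgp]
    exact hp.add hqp

/- A primitive `V` of `u` in `x` is a potential of `(u, V_t)`. The defect `g - V_t` is then weakly
constant in `x`, hence a function of `t` alone, and adding a primitive of it to `V` removes it. -/
theorem IsWeaklyCurlFree.exists_isLipschitzPotential (hab : a < b) (hcd : c < d)
    (hu : LipschitzOnWith K u (Icc a b ×ˢ Icc c d))
    (hg : MemLp g ⊤ (volume.restrict (Ioo a b ×ˢ Ioo c d)))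
    (hcurl : IsWeaklyCurlFree (Ioo a b ×ˢ Ioo c d) u g) :
    ∃ v, IsLipschitzPotential (Ioo a b ×ˢ Ioo c d) u g v := by
  have hΩ : IsOpen (Ioo a b ×ˢ Ioo c d) := isOpen_Ioo.prod isOpen_Ioo
  have hΩb : Bornology.IsBounded (Ioo a b ×ˢ Ioo c d) :=
    (Metric.isBounded_Ioo a b).prod (Metric.isBounded_Ioo c d)
  obtain ⟨g', V, hV⟩ := exists_isLipschitzPotential_of_lipschitzOnWith hab hcd hu
  have hg' := hV.memLp_top_snd hΩ
  obtain ⟨q, -, hq⟩ := exists_ae_eq_comp_snd_of_integral_lineDeriv_eq_zero hab isOpen_Ioo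
    (integrableOn_of_memLp_top hΩb (hg.sub hg')) fun φ hφ =>
      hcurl.setIntegral_sub_mul_lineDeriv_eq_zero (hV.isWeaklyCurlFree hΩ)
        (integrableOn_of_memLp_top hΩb hg) (integrableOn_of_memLp_top hΩb hg') hφ
  have hq_top : MemLp q ⊤ (volume.restrict (Ioo c d)) := by
    refine memLp_top_of_comp_snd (μ := volume.restrict (Ioo a b)) (by simpa using hab) ?_
    rw [Measure.prod_restrict]
    exact (hg.sub hg').ae_eq hq
  obtain ⟨h, N, hN, hhq⟩ := exists_lipschitzOnWith_ae_hasDerivAt hcd.le hq_top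
  exact ⟨_, hV.add_comp_snd hab hcd hN hhq hq⟩

theorem eqOn_of_ae_ae_hasDerivAt_zero {Y : Type*} [TopologicalSpace Y] [MeasurableSpace Y]
    {ν : Measure Y} [ν.IsOpenPosMeasure] {I : Set ℝ} [hI : I.OrdConnected] {U : Set Y}
    (hU : IsOpen U) {f : ℝ → Y → ℝ} (hfc : ∀ x ∈ I, ContinuousOn (f x) U)
    (hfl : ∀ᵐ y ∂ν.restrict U, LipschitzOnWith K (fun x => f x y) I)
    (hf : ∀ᵐ y ∂ν.restrict U, ∀ᵐ x ∂volume.restrict I, HasDerivAt (fun x => f x y) 0 x)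
    {x x' : ℝ} (hx : x ∈ I) (hx' : x' ∈ I) : EqOn (f x) (f x') U := by
  refine Measure.eqOn_open_of_ae_eq (μ := ν) ?_ hU (hfc x hx) (hfc x' hx')
  filter_upwards [hfl, hf] with y hyl hy
  have hxx' : uIcc x x' ⊆ I := hI.uIcc_subset hx hx'
  obtain ⟨C, hC⟩ := (hyl.mono hxx').absolutelyContinuousOnInterval.const_of_ae_hasDerivAt_zero <|
    ((ae_restrict_iff' hI.measurableSet).1 hy).mono fun s hs hsx => hs (hxx' hsx)
  exact (hC x left_mem_uIcc).trans (hC x' right_mem_uIcc).symm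

theorem exists_eqOn_const_of_ae_hasLineDerivAt_zero {s t : Set ℝ} (hs : IsOpen s) (ht : IsOpen t)
    [s.OrdConnected] [t.OrdConnected] {f : ℝ × ℝ → ℝ} (hf : LipschitzOnWith K f (s ×ˢ t))
    (hfx : ∀ᵐ p ∂volume.restrict (s ×ˢ t), HasLineDerivAt ℝ f 0 p (1, 0))
    (hft : ∀ᵐ p ∂volume.restrict (s ×ˢ t), HasLineDerivAt ℝ f 0 p (0, 1)) :
    ∃ k, ∀ p ∈ s ×ˢ t, f p = k := by
  obtain hst | ⟨p₀, hp₀⟩ := (s ×ˢ t).eq_empty_or_nonempty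
  · simp [hst]
  have eq_fst : ∀ x ∈ s, EqOn (fun y => f (x, y)) (fun y => f (p₀.1, y)) t := fun x hx =>
    eqOn_of_ae_ae_hasDerivAt_zero (ν := volume) (f := fun x y => f (x, y)) ht
      (fun _ hx => (lipschitzOnWith_section_snd hf hx).continuousOn)
      ((ae_restrict_mem ht.measurableSet).mono fun _ => lipschitzOnWith_section_fst hf)
      ((ae_ae_restrict_of_ae_restrict_prod' hfx).mono fun y hy =>
        hy.mono fun _ => hasLineDerivAt_fst_iff.1) hx hp₀.1
  have eq_snd : ∀ y ∈ t, EqOn (fun x => f (x, y)) (fun x => f (x, p₀.2)) s := fun y hy =>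
    eqOn_of_ae_ae_hasDerivAt_zero (ν := volume) (f := fun y x => f (x, y)) hs
      (fun _ hy => (lipschitzOnWith_section_fst hf hy).continuousOn)
      ((ae_restrict_mem hs.measurableSet).mono fun _ => lipschitzOnWith_section_snd hf)
      ((ae_ae_restrict_of_ae_restrict_prod hft).mono fun x hx =>
        hx.mono fun _ => hasLineDerivAt_snd_iff.1) hy hp₀.2
  exact ⟨f p₀, fun p hp => (eq_fst p.1 hp.1 hp.2).trans (eq_snd p.2 hp.2 hp₀.1)⟩

theorem IsLipschitzPotential.exists_eq_add_const
    (hv : IsLipschitzPotential (Ioo a b ×ˢ Ioo c d) u g v)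
    (hw : IsLipschitzPotential (Ioo a b ×ˢ Ioo c d) u g w) :
    ∃ k, ∀ p ∈ Ioo a b ×ˢ Ioo c d, v p = w p + k := by
  obtain ⟨K, hK⟩ := hv.exists_lipschitzOnWith
  obtain ⟨L, hL⟩ := hw.exists_lipschitzOnWith
  obtain ⟨k, hk⟩ := exists_eqOn_const_of_ae_hasLineDerivAt_zero isOpen_Ioo isOpen_Ioo
    ((hK.sub hL).mono subset_closure)
    (by filter_upwards [hv.hasLineDerivAt_fst, hw.hasLineDerivAt_fst] with p hvp hwp
        simpa only [sub_self] using hasLineDerivAt_sub hvp hwp)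
    (by filter_upwards [hv.hasLineDerivAt_snd, hw.hasLineDerivAt_snd] with p hvp hwp
        simpa only [sub_self] using hasLineDerivAt_sub hvp hwp)
  exact ⟨k, fun p hp => by rw [← hk p hp, add_sub_cancel]⟩

end Potential

section Continuity

variable {a b : ℝ} {φ φ' : ℝ → ℝ}

theorem memLp_top_restrict_of_continuousOn {X : Type*} [TopologicalSpace X] [MeasurableSpace X]
    [OpensMeasurableSpace X] [T2Space X] {μ : Measure X} {s K : Set X} (hK : IsCompact K)
    (hsK : s ⊆ K) {f : X → ℝ} (hf : ContinuousOn f K) : MemLp f ⊤ (μ.restrict s) := by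
  obtain ⟨C, hC⟩ := hK.exists_bound_of_continuousOn hf
  have hfK : MemLp f ⊤ (μ.restrict K) :=
    memLp_top_of_bound (hf.aestronglyMeasurable_of_isCompact hK hK.measurableSet) C <|
      (ae_restrict_mem hK.measurableSet).mono hC
  exact hfK.mono_measure (Measure.restrict_mono hsK le_rfl)

theorem continuousOn_integral_fst {Y : Type*} [TopologicalSpace Y] {S : Set Y} (hab : a ≤ b)
    {f : ℝ × Y → ℝ} (hf : ContinuousOn f (Icc a b ×ˢ S)) :
    ContinuousOn (fun p : ℝ × Y => ∫ y in a..p.1, f (y, p.2)) (Icc a b ×ˢ S) := by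
  have hfS : Continuous fun q : ↥(Icc a b ×ˢ S) × ℝ => f (projIcc a b hab q.2, q.1.1.2) :=
    hf.comp_continuous (by fun_prop) fun q => ⟨Subtype.prop _, q.1.2.2⟩
  have hF : Continuous fun p : ↥(Icc a b ×ˢ S) =>
      ∫ y in a..p.1.1, f (projIcc a b hab y, p.1.2) :=
    intervalIntegral.continuous_parametric_intervalIntegral_of_continuous hfS (by fun_prop)
  rw [continuousOn_iff_continuous_domRestrict]
  refine hF.congr fun p => intervalIntegral.integral_congr fun y hy => ?_
  rw [uIcc_of_le p.2.1.1] at hy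
  simp only [projIcc_of_mem hab (Icc_subset_Icc_right p.2.1.2 hy)]

theorem hasDerivAt_intervalIntegral_of_continuousOn (hφ : ContinuousOn φ (Icc a b)) {x : ℝ}
    (hx : x ∈ Ioo a b) : HasDerivAt (fun x => ∫ y in a..x, φ y) (φ x) x := by
  refine intervalIntegral.integral_hasDerivAt_right ?_
    ((hφ.mono Ioo_subset_Icc_self).stronglyMeasurableAtFilter isOpen_Ioo x hx)
    (hφ.continuousAt (Icc_mem_nhds hx.1 hx.2))
  exact (hφ.mono (Icc_subset_Icc_right hx.2.le)).intervalIntegrable_of_Icc hx.1.le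

theorem absolutelyContinuousOnInterval_integral_of_continuousOn (hab : a ≤ b)
    (hφ : ContinuousOn φ (Icc a b)) :
    AbsolutelyContinuousOnInterval (fun x => ∫ y in a..x, φ y) a b :=
  (hφ.intervalIntegrable_of_Icc hab).absolutelyContinuousOnInterval_intervalIntegral left_mem_uIcc

theorem absolutelyContinuousOnInterval_of_hasDerivWithinAt (hab : a ≤ b)
    (hφ : ∀ x ∈ Icc a b, HasDerivWithinAt φ (φ' x) (Icc a b) x)
    (hφ' : ContinuousOn φ' (Icc a b)) : AbsolutelyContinuousOnInterval φ a b := by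
  obtain ⟨M, hM⟩ := isCompact_Icc.exists_bound_of_continuousOn hφ'
  have hlip : LipschitzOnWith M.toNNReal φ (Icc a b) :=
    (convex_Icc a b).lipschitzOnWith_of_nnnorm_hasDerivWithin_le hφ fun x hx =>
      NNReal.coe_le_coe.1 ((hM x hx).trans (Real.le_coe_toNNReal M))
  rw [← uIcc_of_le hab] at hlip
  exact hlip.absolutelyContinuousOnInterval

end Continuity

section Composition

variable {X Y Z : Type*} [MeasurableSpace X] {μ : Measure X} {σ : Y → Z} {w : X → Y}

theorem aemeasurable_comp_of_continuousOn_union [TopologicalSpace Y] [MeasurableSpace Y]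
    [OpensMeasurableSpace Y] [TopologicalSpace Z] [MeasurableSpace Z] [BorelSpace Z] {s t : Set Y}
    (hs : MeasurableSet s) (ht : MeasurableSet t) (hσs : ContinuousOn σ s)
    (hσt : ContinuousOn σ t) (hw : AEMeasurable w μ) (hwst : ∀ᵐ x ∂μ, w x ∈ s ∪ t) :
    AEMeasurable (fun x => σ (w x)) μ := by
  have hσ : AEMeasurable σ ((μ.map w).restrict (s ∪ t)) :=
    aemeasurable_union_iff.2 ⟨hσs.aemeasurable hs, hσt.aemeasurable ht⟩
  have hst : ∀ᵐ y ∂μ.map w, y ∈ s ∪ t := (ae_map_iff hw (hs.union ht)).2 hwst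
  rw [Measure.restrict_eq_self_of_ae_mem hst] at hσ
  exact hσ.comp_aemeasurable hw

theorem memLp_top_comp [NormedAddCommGroup Y] [NormedAddCommGroup Z]
    (hσ : ∀ R, 0 < R → ∃ M, ∀ s, ‖s‖ ≤ R → ‖σ s‖ ≤ M) (hw : MemLp w ⊤ μ)
    (hσw : AEStronglyMeasurable (fun x => σ (w x)) μ) : MemLp (fun x => σ (w x)) ⊤ μ := by
  obtain ⟨M, hM⟩ := hσ (lpNorm w ⊤ μ + 1) (by linarith [lpNorm_nonneg (f := w) (p := ⊤) (μ := μ)])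
  refine memLp_top_of_bound hσw M ?_
  filter_upwards [ae_le_lpNorm_exponent_top hw] with x hx
  exact hM _ (by linarith)

theorem memLp_top_comp_of_continuousOn_union [NormedAddCommGroup Y] [MeasurableSpace Y]
    [BorelSpace Y] [NormedAddCommGroup Z] [SecondCountableTopology Z] {s t : Set Y}
    (hs : MeasurableSet s) (ht : MeasurableSet t) (hσs : ContinuousOn σ s)
    (hσt : ContinuousOn σ t) (hσ : ∀ R, 0 < R → ∃ M, ∀ s, ‖s‖ ≤ R → ‖σ s‖ ≤ M)
    (hw : MemLp w ⊤ μ) (hwst : ∀ᵐ x ∂μ, w x ∈ s ∪ t) : MemLp (fun x => σ (w x)) ⊤ μ := by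
  borelize Z
  exact memLp_top_comp hσ hw (aemeasurable_comp_of_continuousOn_union hs ht hσs hσt
    hw.aestronglyMeasurable.aemeasurable hwst).aestronglyMeasurable

end Composition

section BalanceLaw

variable {a b : ℝ} {U : Set ℝ} {u S R R' : ℝ × ℝ → ℝ}

theorem isWeaklyCurlFree_add_iff (hab : a < b) (hU : MeasurableSet U)
    (hu : IntegrableOn u (Ioo a b ×ˢ U)) (hS : IntegrableOn S (Ioo a b ×ˢ U))
    (hR : IntegrableOn R (Ioo a b ×ˢ U))
    (hRac : ∀ t ∈ U, AbsolutelyContinuousOnInterval (fun x => R (x, t)) a b)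
    (hR' : ∀ᵐ p ∂volume.restrict (Ioo a b ×ˢ U), HasLineDerivAt ℝ R (R' p) p (1, 0))
    (hR'i : IntegrableOn R' (Ioo a b ×ˢ U)) :
    IsWeaklyCurlFree (Ioo a b ×ˢ U) u (fun p => S p + R p) ↔
      ∀ φ, IsTestFunction (Ioo a b ×ˢ U) φ →
        ∫ p in Ioo a b ×ˢ U, (u p * lineDeriv ℝ φ p (0, 1) - S p * lineDeriv ℝ φ p (1, 0)
          + R' p * φ p) = 0 := by
  refine forall₂_congr fun φ hφ => ?_
  have hut := (hφ.lineDeriv (0, 1)).integrableOn_mul hu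
  have hSx := (hφ.lineDeriv (1, 0)).integrableOn_mul hS
  have hRx := (hφ.lineDeriv (1, 0)).integrableOn_mul hR
  have hutSx : IntegrableOn (fun p => u p * lineDeriv ℝ φ p (0, 1) - S p * lineDeriv ℝ φ p (1, 0))
      (Ioo a b ×ˢ U) := hut.sub hSx
  have parts := setIntegral_prod_mul_lineDeriv_fst (ν := volume) hab hU hR hRac hR' hR'i hφ
  rw [← Measure.volume_eq_prod] at parts
  simp only [add_mul]
  rw [integral_add hSx hRx, parts, integral_add hutSx (hφ.integrableOn_mul hR'i),
    integral_sub hut hSx]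
  constructor <;> intro h <;> linarith

end BalanceLaw

section Slice

variable {x₀ x₁ : ℝ} {b b' c f u : ℝ → ℝ}

theorem absolutelyContinuousOnInterval_mul_add_integral_add_integral (hx : x₀ ≤ x₁)
    (hb : ∀ x ∈ Icc x₀ x₁, HasDerivWithinAt b (b' x) (Icc x₀ x₁) x)
    (hb' : ContinuousOn b' (Icc x₀ x₁)) (hc : ContinuousOn c (Icc x₀ x₁))
    (hf : ContinuousOn f (Icc x₀ x₁)) {K : ℝ≥0} (hu : LipschitzOnWith K u (Icc x₀ x₁)) :
    AbsolutelyContinuousOnInterval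
      (fun x => b x * u x + (∫ y in x₀..x, (c y - b' y) * u y) + ∫ y in x₀..x, f y) x₀ x₁ := by
  have hu' : AbsolutelyContinuousOnInterval u x₀ x₁ := by
    rw [← uIcc_of_le hx] at hu
    exact hu.absolutelyContinuousOnInterval
  exact (((absolutelyContinuousOnInterval_of_hasDerivWithinAt hx hb hb').fun_mul hu').fun_add
    (absolutelyContinuousOnInterval_integral_of_continuousOn hx
      ((hc.sub hb').mul hu.continuousOn))).fun_add
    (absolutelyContinuousOnInterval_integral_of_continuousOn hx hf)

theorem hasDerivAt_mul_add_integral_add_integral {x u' : ℝ} (hx : x ∈ Ioo x₀ x₁)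
    (hb : HasDerivAt b (b' x) x) (hb' : ContinuousOn b' (Icc x₀ x₁))
    (hc : ContinuousOn c (Icc x₀ x₁)) (hf : ContinuousOn f (Icc x₀ x₁))
    (hu : ContinuousOn u (Icc x₀ x₁)) (hu' : HasDerivAt u u' x) :
    HasDerivAt (fun x => b x * u x + (∫ y in x₀..x, (c y - b' y) * u y) + ∫ y in x₀..x, f y)
      (b x * u' + c x * u x + f x) x := by
  refine (((hb.mul hu').add (hasDerivAt_intervalIntegral_of_continuousOn
    ((hc.sub hb').mul hu) hx)).add
      (hasDerivAt_intervalIntegral_of_continuousOn hf hx)).congr_deriv ?_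
  dsimp only [Pi.sub_apply, Pi.mul_apply]
  ring

end Slice

section Application

/-- The equation `u_t = (σ(u_x))_x + b u_x + c u + f` in the sense of distributions in `Ω_T`, with
`ux` standing for the a.e. derivative `u_x`. -/
def IsDistributionalSolution (T : ℝ) (sigma : ℝ → ℝ) (b c f u ux : ℝ → ℝ → ℝ) : Prop :=
  ∀ ζ : ℝ → ℝ → ℝ,
    ContDiff ℝ (⊤ : ℕ∞) (fun p : ℝ × ℝ => ζ p.1 p.2) →
    HasCompactSupport (fun p : ℝ × ℝ => ζ p.1 p.2) →
    tsupport (fun p : ℝ × ℝ => ζ p.1 p.2) ⊆ OmegaT T →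
    ∫ p in OmegaT T,
      (u p.1 p.2 * deriv (fun τ => ζ p.1 τ) p.2
        - sigma (ux p.1 p.2) * deriv (fun y => ζ y p.2) p.1
        + (b p.1 p.2 * ux p.1 p.2 + c p.1 p.2 * u p.1 p.2 + f p.1 p.2) * ζ p.1 p.2) = 0

/-- The terms `b u_x + c u + f` of the equation, with `ux` standing for `u_x`. -/
def lowerOrderTerm (b c f u ux : ℝ → ℝ → ℝ) (p : ℝ × ℝ) : ℝ :=
  b p.1 p.2 * ux p.1 p.2 + c p.1 p.2 * u p.1 p.2 + f p.1 p.2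

/-- The function `b u + P_u + F`, an antiderivative in `x` of `lowerOrderTerm`. -/
def lowerOrderFlux (b bx c f u : ℝ → ℝ → ℝ) (p : ℝ × ℝ) : ℝ :=
  b p.1 p.2 * u p.1 p.2 + Pot c bx u p.1 p.2 + Fint f p.1 p.2

variable {T : ℝ} {sigma : ℝ → ℝ} {b bx c f u ux v : ℝ → ℝ → ℝ}

theorem OmegaT_subset_ClOmegaT : OmegaT T ⊆ ClOmegaT T :=
  prod_mono Ioo_subset_Icc_self Ioo_subset_Icc_self

theorem isOpen_OmegaT : IsOpen (OmegaT T) :=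
  isOpen_Ioo.prod isOpen_Ioo

theorem isCompact_ClOmegaT : IsCompact (ClOmegaT T) :=
  isCompact_Icc.prod isCompact_Icc

theorem isBounded_OmegaT : Bornology.IsBounded (OmegaT T) :=
  isCompact_ClOmegaT.isBounded.subset OmegaT_subset_ClOmegaT

theorem memLp_top_OmegaT_of_continuousOn {g : ℝ × ℝ → ℝ} (hg : ContinuousOn g (ClOmegaT T)) :
    MemLp g ⊤ (volume.restrict (OmegaT T)) :=
  memLp_top_restrict_of_continuousOn isCompact_ClOmegaT OmegaT_subset_ClOmegaT hg

theorem continuousOn_section_fst {X Y Z : Type*} [TopologicalSpace X] [TopologicalSpace Y]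
    [TopologicalSpace Z] {s : Set X} {t : Set Y} {g : X → Y → Z}
    (hg : ContinuousOn (fun p : X × Y => g p.1 p.2) (s ×ˢ t)) {y : Y} (hy : y ∈ t) :
    ContinuousOn (fun x => g x y) s :=
  hg.comp (Continuous.prodMk_left y).continuousOn fun _ hx => ⟨hx, hy⟩

theorem isDistributionalSolution_iff_forall_isTestFunction :
    IsDistributionalSolution T sigma b c f u ux ↔
      ∀ φ, IsTestFunction (OmegaT T) φ →
        ∫ p in OmegaT T,
          (u p.1 p.2 * lineDeriv ℝ φ p (0, 1) - sigma (ux p.1 p.2) * lineDeriv ℝ φ p (1, 0)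
            + lowerOrderTerm b c f u ux p * φ p) = 0 := by
  simp only [lineDeriv_fst_eq_deriv, lineDeriv_snd_eq_deriv]
  exact ⟨fun h φ hφ => h (fun x t => φ (x, t)) hφ.contDiff hφ.hasCompactSupport hφ.tsupport_subset,
    fun h ζ hζ hζc hζΩ => h _ ⟨hζ, hζc, hζΩ⟩⟩

theorem isStreamFunction_iff_isLipschitzPotential (hT : 0 < T) :
    IsStreamFunction T sigma b bx c f u ux v ↔
      IsLipschitzPotential (OmegaT T) (fun p => u p.1 p.2)
        (fun p => sigma (ux p.1 p.2) + lowerOrderFlux b bx c f u p) fun p => v p.1 p.2 := by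
  have hcl : closure (OmegaT T) = ClOmegaT T := closure_Ioo_prod_Ioo one_pos hT
  have hflux (p : ℝ × ℝ) : sigma (ux p.1 p.2) + lowerOrderFlux b bx c f u p =
      sigma (ux p.1 p.2) + b p.1 p.2 * u p.1 p.2 + Pot c bx u p.1 p.2 + Fint f p.1 p.2 := by
    rw [lowerOrderFlux, ← add_assoc, ← add_assoc]
  constructor
  · rintro ⟨hlip, vx, vt, hvx, hvt, hvxu, hvtg⟩
    refine ⟨hcl ▸ hlip, ?_, ?_⟩
    · filter_upwards [hvx, hvxu] with p hp hpu
      exact hasLineDerivAt_fst_iff.2 (hpu ▸ hp)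
    · filter_upwards [hvt, hvtg] with p hp hpg
      exact hasLineDerivAt_snd_iff.2 ((hpg.trans (hflux p).symm) ▸ hp)
  · rintro ⟨hlip, hvx, hvt⟩
    exact ⟨hcl ▸ hlip, u, fun x t => sigma (ux x t) + lowerOrderFlux b bx c f u (x, t),
      hvx.mono fun p => hasLineDerivAt_fst_iff.1, hvt.mono fun p => hasLineDerivAt_snd_iff.1,
      ae_of_all _ fun _ => rfl, ae_of_all _ hflux⟩

theorem memLp_top_of_ae_hasDerivAt_fst
    (hlip : ∃ K : ℝ≥0, LipschitzOnWith K (fun p : ℝ × ℝ => u p.1 p.2) (ClOmegaT T))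
    (hux : ∀ᵐ p ∂volume.restrict (OmegaT T), HasDerivAt (fun y => u y p.2) (ux p.1 p.2) p.1) :
    MemLp (fun p : ℝ × ℝ => ux p.1 p.2) ⊤ (volume.restrict (OmegaT T)) := by
  obtain ⟨K, hu⟩ := hlip
  exact memLp_top_of_hasLineDerivAt (v := (1, 0)) isOpen_OmegaT (hu.mono OmegaT_subset_ClOmegaT)
    (hux.mono fun _ hp => hasLineDerivAt_fst_iff.2 hp)

theorem continuousOn_lowerOrderFlux
    (hb : ContinuousOn (fun p : ℝ × ℝ => b p.1 p.2) (ClOmegaT T))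
    (hbx : ContinuousOn (fun p : ℝ × ℝ => bx p.1 p.2) (ClOmegaT T))
    (hc : ContinuousOn (fun p : ℝ × ℝ => c p.1 p.2) (ClOmegaT T))
    (hf : ContinuousOn (fun p : ℝ × ℝ => f p.1 p.2) (ClOmegaT T))
    (hu : ContinuousOn (fun p : ℝ × ℝ => u p.1 p.2) (ClOmegaT T)) :
    ContinuousOn (lowerOrderFlux b bx c f u) (ClOmegaT T) :=
  ((hb.mul hu).add (continuousOn_integral_fst zero_le_one ((hc.sub hbx).mul hu))).add
    (continuousOn_integral_fst zero_le_one hf)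

theorem integrableOn_lowerOrderTerm
    (hb : ContinuousOn (fun p : ℝ × ℝ => b p.1 p.2) (ClOmegaT T))
    (hc : ContinuousOn (fun p : ℝ × ℝ => c p.1 p.2) (ClOmegaT T))
    (hf : ContinuousOn (fun p : ℝ × ℝ => f p.1 p.2) (ClOmegaT T))
    (hu : ContinuousOn (fun p : ℝ × ℝ => u p.1 p.2) (ClOmegaT T))
    (hux : MemLp (fun p => ux p.1 p.2) ⊤ (volume.restrict (OmegaT T))) :
    IntegrableOn (lowerOrderTerm b c f u ux) (OmegaT T) :=
  integrableOn_of_memLp_top isBounded_OmegaT <|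
    ((hux.mul' (memLp_top_OmegaT_of_continuousOn hb)).add
      (memLp_top_OmegaT_of_continuousOn (hc.mul hu))).add (memLp_top_OmegaT_of_continuousOn hf)

section Coefficients

variable
  (hb : ∀ p ∈ ClOmegaT T, HasDerivWithinAt (fun y => b y p.2) (bx p.1 p.2) (Icc (0 : ℝ) 1) p.1)
  (hbx : ContinuousOn (fun p : ℝ × ℝ => bx p.1 p.2) (ClOmegaT T))
  (hc : ContinuousOn (fun p : ℝ × ℝ => c p.1 p.2) (ClOmegaT T))
  (hf : ContinuousOn (fun p : ℝ × ℝ => f p.1 p.2) (ClOmegaT T))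

include hb hbx hc hf

theorem absolutelyContinuousOnInterval_lowerOrderFlux {K : ℝ≥0}
    (hu : LipschitzOnWith K (fun p : ℝ × ℝ => u p.1 p.2) (ClOmegaT T)) {t : ℝ}
    (ht : t ∈ Icc 0 T) :
    AbsolutelyContinuousOnInterval (fun x => lowerOrderFlux b bx c f u (x, t)) 0 1 := by
  have hut : LipschitzOnWith K (fun x => u x t) (Icc 0 1) := lipschitzOnWith_section_fst hu ht
  simp only [lowerOrderFlux, Pot, Fint]
  exact absolutelyContinuousOnInterval_mul_add_integral_add_integral zero_le_one
    (fun x hx => hb (x, t) ⟨hx, ht⟩) (continuousOn_section_fst hbx ht)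
    (continuousOn_section_fst hc ht) (continuousOn_section_fst hf ht) hut

theorem hasLineDerivAt_lowerOrderFlux
    (hu : ContinuousOn (fun p : ℝ × ℝ => u p.1 p.2) (ClOmegaT T)) {p : ℝ × ℝ}
    (hp : p ∈ OmegaT T) (hux : HasDerivAt (fun y => u y p.2) (ux p.1 p.2) p.1) :
    HasLineDerivAt ℝ (lowerOrderFlux b bx c f u) (lowerOrderTerm b c f u ux p) p (1, 0) :=
  have ht : p.2 ∈ Icc 0 T := Ioo_subset_Icc_self hp.2
  hasLineDerivAt_fst_iff.2 <| hasDerivAt_mul_add_integral_add_integral hp.1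
    ((hb p (OmegaT_subset_ClOmegaT hp)).hasDerivAt (Icc_mem_nhds hp.1.1 hp.1.2))
    (continuousOn_section_fst hbx ht) (continuousOn_section_fst hc ht)
    (continuousOn_section_fst hf ht) (continuousOn_section_fst hu ht) hux

theorem isDistributionalSolution_iff_isWeaklyCurlFree
    (hflux : MemLp (fun p : ℝ × ℝ => sigma (ux p.1 p.2)) ⊤ (volume.restrict (OmegaT T)))
    (hb' : ContinuousOn (fun p : ℝ × ℝ => b p.1 p.2) (ClOmegaT T)) {K : ℝ≥0}
    (hu : LipschitzOnWith K (fun p : ℝ × ℝ => u p.1 p.2) (ClOmegaT T))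
    (hux : ∀ᵐ p ∂volume.restrict (OmegaT T), HasDerivAt (fun y => u y p.2) (ux p.1 p.2) p.1) :
    IsDistributionalSolution T sigma b c f u ux ↔
      IsWeaklyCurlFree (OmegaT T) (fun p => u p.1 p.2)
        fun p => sigma (ux p.1 p.2) + lowerOrderFlux b bx c f u p := by
  have huc := hu.continuousOn
  rw [isDistributionalSolution_iff_forall_isTestFunction]
  refine (isWeaklyCurlFree_add_iff zero_lt_one measurableSet_Ioo
    (integrableOn_of_memLp_top isBounded_OmegaT (memLp_top_OmegaT_of_continuousOn huc))
    (integrableOn_of_memLp_top isBounded_OmegaT hflux)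
    (integrableOn_of_memLp_top isBounded_OmegaT <|
      memLp_top_OmegaT_of_continuousOn (continuousOn_lowerOrderFlux hb' hbx hc hf huc))
    (fun t ht => absolutelyContinuousOnInterval_lowerOrderFlux hb hbx hc hf hu
      (Ioo_subset_Icc_self ht)) ?_
    (integrableOn_lowerOrderTerm hb' hc hf huc (memLp_top_of_ae_hasDerivAt_fst ⟨K, hu⟩ hux))).symm
  filter_upwards [hux, ae_restrict_mem isOpen_OmegaT.measurableSet] with p hpux hp
  exact hasLineDerivAt_lowerOrderFlux hb hbx hc hf huc hp hpux

end Coefficients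

theorem distributional_iff_stream_function_general (hT : 0 < T)
    (hflux : MemLp (fun p : ℝ × ℝ => sigma (ux p.1 p.2)) ⊤ (volume.restrict (OmegaT T)))
    (hb : ContinuousOn (fun p : ℝ × ℝ => b p.1 p.2) (ClOmegaT T))
    (hbx : ∀ p ∈ ClOmegaT T,
      HasDerivWithinAt (fun y => b y p.2) (bx p.1 p.2) (Icc (0 : ℝ) 1) p.1)
    (hbx_cont : ContinuousOn (fun p : ℝ × ℝ => bx p.1 p.2) (ClOmegaT T))
    (hc : ContinuousOn (fun p : ℝ × ℝ => c p.1 p.2) (ClOmegaT T))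
    (hf : ContinuousOn (fun p : ℝ × ℝ => f p.1 p.2) (ClOmegaT T))
    (hlip : ∃ K : ℝ≥0, LipschitzOnWith K (fun p : ℝ × ℝ => u p.1 p.2) (ClOmegaT T))
    (hux : ∀ᵐ p ∂volume.restrict (OmegaT T),
      HasDerivAt (fun y => u y p.2) (ux p.1 p.2) p.1) :
    (IsDistributionalSolution T sigma b c f u ux ↔
      ∃ v, IsStreamFunction T sigma b bx c f u ux v) ∧
    ∀ v w, IsStreamFunction T sigma b bx c f u ux v → IsStreamFunction T sigma b bx c f u ux w →
      ∃ k : ℝ, ∀ p ∈ OmegaT T, v p.1 p.2 = w p.1 p.2 + k := by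
  obtain ⟨K, hu⟩ := hlip
  simp only [isStreamFunction_iff_isLipschitzPotential hT,
    isDistributionalSolution_iff_isWeaklyCurlFree hbx hbx_cont hc hf hflux hb hu hux]
  refine ⟨⟨fun hcurl => ?_, fun ⟨v, hv⟩ => hv.isWeaklyCurlFree isOpen_OmegaT⟩,
    fun v w hv hw => hv.exists_eq_add_const hw⟩
  have hg := hflux.add (memLp_top_OmegaT_of_continuousOn
    (continuousOn_lowerOrderFlux hb hbx_cont hc hf hu.continuousOn))
  obtain ⟨v, hv⟩ := hcurl.exists_isLipschitzPotential zero_lt_one hT hu hg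
  exact ⟨fun x t => v (x, t), hv⟩

end Application

/-- A Lipschitz function `u` is a distributional solution of
`u_t = (σ(u_x))_x + b u_x + c u + f` in `Ω_T` iff it admits a Lipschitz stream function `v`
with `v_x = u` and `v_t = σ(u_x) + b u + P_u + F` a.e.; moreover `v` is unique up to an
additive constant. -/
theorem distributional_iff_stream_function
    (T s1 s2 : ℝ) (hT : 0 < T) (hs1 : 0 < s1) (hs12 : s1 < s2)
    (sigma : ℝ → ℝ)
    (hsigma_l : ContinuousOn sigma (Iic s1)) (hsigma_r : ContinuousOn sigma (Ici s2))
    (hsigma_bdd : ∀ R : ℝ, 0 < R → ∃ M : ℝ, ∀ s : ℝ, |s| ≤ R → |sigma s| ≤ M)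
    (b bx c f : ℝ → ℝ → ℝ)
    (hb : ContinuousOn (fun p : ℝ × ℝ => b p.1 p.2) (ClOmegaT T))
    (hbx : ∀ p ∈ ClOmegaT T,
      HasDerivWithinAt (fun y => b y p.2) (bx p.1 p.2) (Icc (0:ℝ) 1) p.1)
    (hbx_cont : ContinuousOn (fun p : ℝ × ℝ => bx p.1 p.2) (ClOmegaT T))
    (hc : ContinuousOn (fun p : ℝ × ℝ => c p.1 p.2) (ClOmegaT T))
    (hf : ContinuousOn (fun p : ℝ × ℝ => f p.1 p.2) (ClOmegaT T))
    (u ux ut : ℝ → ℝ → ℝ)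
    (hlip : ∃ K : ℝ≥0, LipschitzOnWith K (fun p : ℝ × ℝ => u p.1 p.2) (ClOmegaT T))
    (hux : ∀ᵐ p ∂(volume.restrict (OmegaT T)), HasDerivAt (fun y => u y p.2) (ux p.1 p.2) p.1)
    (hut : ∀ᵐ p ∂(volume.restrict (OmegaT T)), HasDerivAt (fun τ => u p.1 τ) (ut p.1 p.2) p.2)
    (hrange : ∀ᵐ p ∂(volume.restrict (OmegaT T)), ux p.1 p.2 ≤ s1 ∨ s2 ≤ ux p.1 p.2) :
    ((∀ ζ : ℝ → ℝ → ℝ,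
        ContDiff ℝ (⊤ : ℕ∞) (fun p : ℝ × ℝ => ζ p.1 p.2) →
        HasCompactSupport (fun p : ℝ × ℝ => ζ p.1 p.2) →
        tsupport (fun p : ℝ × ℝ => ζ p.1 p.2) ⊆ OmegaT T →
        (∫ p in OmegaT T,
          (u p.1 p.2 * deriv (fun τ => ζ p.1 τ) p.2
            - sigma (ux p.1 p.2) * deriv (fun y => ζ y p.2) p.1
            + (b p.1 p.2 * ux p.1 p.2 + c p.1 p.2 * u p.1 p.2 + f p.1 p.2) * ζ p.1 p.2)) = 0)
      ↔ ∃ v : ℝ → ℝ → ℝ, IsStreamFunction T sigma b bx c f u ux v) ∧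
    (∀ v w : ℝ → ℝ → ℝ, IsStreamFunction T sigma b bx c f u ux v →
      IsStreamFunction T sigma b bx c f u ux w →
      ∃ k : ℝ, ∀ p ∈ OmegaT T, v p.1 p.2 = w p.1 p.2 + k) := by
  have hflux := memLp_top_comp_of_continuousOn_union measurableSet_Iic measurableSet_Ici hsigma_l
    hsigma_r hsigma_bdd (memLp_top_of_ae_hasDerivAt_fst hlip hux) hrange
  exact distributional_iff_stream_function_general hT hflux hb hbx hbx_cont hc hf hlip hux
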